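/- arXiv:1208.0713 — 2 statements merged into one kernel-verified Lean document; each statement's English description precedes it below -/
import Mathlib

section
/- Let n ≥ m ≥ 1, Z ∈ {X,Y}, and u, v ∈ A*. If u and v agree on rankers from uR^Z_{2m-1,2n-1} (i.e., the same rankers of uR^Z_{2m-1,2n-1} are defined on u and v), then u and v agree on condensed rankers from uR^Z_{m,n} (i.e., u ⊳_{m,n} v when Z = X, and u ⊲_{m,n} v when Z = Y). -/
namespace RankerPaper

variable {A : Type*} [DecidableEq A]

/-- Letters of rankers: `X a` ("next `a` to the right") and `Y a` ("next `a` to the left"). -/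
inductive RLetter (A : Type*) where
  | X : A → RLetter A
  | Y : A → RLetter A
  deriving DecidableEq

/-- Least `a`-position of `u` strictly greater than `q` (positions are 1-indexed). -/
def nextOcc (u : List A) (a : A) (q : ℕ) : Option ℕ :=
  ((List.range (u.length + 2)).filter (fun i => decide (q < i ∧ u[i-1]? = some a))).head?

/-- Greatest `a`-position of `u` strictly less than `q` (positions are 1-indexed). -/
def prevOcc (u : List A) (a : A) (q : ℕ) : Option ℕ :=
  ((List.range (u.length + 2)).filter
    (fun i => decide (1 ≤ i ∧ i < q ∧ u[i-1]? = some a))).getLast?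

/-- One evaluation step of a ranker letter from position `q`. -/
def stepR (u : List A) : RLetter A → ℕ → Option ℕ
  | .X a, q => nextOcc u a q
  | .Y a, q => prevOcc u a q

/-- Evaluation of a ranker from position `q`, processing letters left to right. -/
def evalFrom (u : List A) : List (RLetter A) → ℕ → Option ℕ
  | [], q => some q
  | z :: r, q => (stepR u z q).bind (evalFrom u r)

/-- Starting position: `0` for an `X`-letter, `|u|+1` for a `Y`-letter. -/
def startPos (u : List A) : RLetter A → ℕ
  | .X _ => 0
  | .Y _ => u.length + 1

/-- The position `r(u)` defined by the ranker `r` on `u` (`none` if undefined;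
empty rankers are considered undefined, rankers being nonempty words). -/
def evalR (u : List A) (r : List (RLetter A)) : Option ℕ :=
  match r with
  | [] => none
  | z :: t => evalFrom u (z :: t) (startPos u z)

/-- `r` is defined on `u`. -/
def Defined (u : List A) (r : List (RLetter A)) : Prop := (evalR u r).isSome

/-- The position `r(u)` (defaulting to `0` when undefined). -/
def pos (u : List A) (r : List (RLetter A)) : ℕ := (evalR u r).getD 0

/-- Do two ranker letters have the same direction? -/
def sameDir : RLetter A → RLetter A → Bool
  | .X _, .X _ => true
  | .Y _, .Y _ => true
  | _, _ => false

/-- Number of (alternating) blocks of a ranker. -/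
def numBlocks : List (RLetter A) → ℕ
  | [] => 0
  | [_] => 1
  | z :: w :: t => (if sameDir z w then 0 else 1) + numBlocks (w :: t)

def startsX (r : List (RLetter A)) : Prop := ∃ a t, r = RLetter.X a :: t
def startsY (r : List (RLetter A)) : Prop := ∃ a t, r = RLetter.Y a :: t
def endsX (r : List (RLetter A)) : Prop := ∃ a, r.getLast? = some (RLetter.X a)
def endsY (r : List (RLetter A)) : Prop := ∃ a, r.getLast? = some (RLetter.Y a)

/-- `R^X_{m,n}`: rankers with exactly `m` blocks, depth `n`, starting with an `X`-block. -/
def RX (m n : ℕ) (r : List (RLetter A)) : Prop :=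
  numBlocks r = m ∧ r.length = n ∧ startsX r

/-- `R^Y_{m,n}`: rankers with exactly `m` blocks, depth `n`, starting with a `Y`-block. -/
def RY (m n : ℕ) (r : List (RLetter A)) : Prop :=
  numBlocks r = m ∧ r.length = n ∧ startsY r

/-- `uR^X_{m,n}`. -/
def uRX (m n : ℕ) (r : List (RLetter A)) : Prop :=
  (∃ m' n', m' ≤ m ∧ n' ≤ n ∧ RX m' n' r) ∨ (∃ m' n', m' < m ∧ n' < n ∧ RY m' n' r)

/-- `uR^Y_{m,n}`. -/
def uRY (m n : ℕ) (r : List (RLetter A)) : Prop :=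
  (∃ m' n', m' ≤ m ∧ n' ≤ n ∧ RY m' n' r) ∨ (∃ m' n', m' < m ∧ n' < n ∧ RX m' n' r)

/-- `uR_{m,n} = uR^X_{m,n} ∪ uR^Y_{m,n}`. -/
def uR (m n : ℕ) (r : List (RLetter A)) : Prop := uRX m n r ∨ uRY m n r

/-- `uR^X_m = ∪_{n ≥ m} uR^X_{m,n}`. -/
def uRXm (m : ℕ) (r : List (RLetter A)) : Prop := ∃ n, m ≤ n ∧ uRX m n r

/-- `uR^Y_m = ∪_{n ≥ m} uR^Y_{m,n}`. -/
def uRYm (m : ℕ) (r : List (RLetter A)) : Prop := ∃ n, m ≤ n ∧ uRY m n r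

/-- `r = Z₁ ⋯ Z_n` is condensed on `u`: it is defined on `u` and there is a chain of
open intervals `(0;|u|+1) = (i₀;j₀) ⊃ (i₁;j₁) ⊃ ⋯ ⊃ (i_{n-1};j_{n-1}) ∋ r(u)`
updated according to the pairs `Z_ℓ Z_{ℓ+1}`. -/
def Condensed (u : List A) (r : List (RLetter A)) : Prop :=
  ∃ (p : ℕ) (i j : ℕ → ℕ),
    evalR u r = some p ∧
    i 0 = 0 ∧ j 0 = u.length + 1 ∧
    (∀ ℓ a b, 1 ≤ ℓ → r[ℓ-1]? = some (RLetter.X a) → r[ℓ]? = some (RLetter.X b) →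
        nextOcc u a (i (ℓ-1)) = some (i ℓ) ∧ j ℓ = j (ℓ-1)) ∧
    (∀ ℓ a b, 1 ≤ ℓ → r[ℓ-1]? = some (RLetter.Y a) → r[ℓ]? = some (RLetter.Y b) →
        i ℓ = i (ℓ-1) ∧ prevOcc u a (j (ℓ-1)) = some (j ℓ)) ∧
    (∀ ℓ a b, 1 ≤ ℓ → r[ℓ-1]? = some (RLetter.X a) → r[ℓ]? = some (RLetter.Y b) →
        i ℓ = i (ℓ-1) ∧ nextOcc u a (i (ℓ-1)) = some (j ℓ)) ∧
    (∀ ℓ a b, 1 ≤ ℓ → r[ℓ-1]? = some (RLetter.Y a) → r[ℓ]? = some (RLetter.X b) →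
        prevOcc u a (j (ℓ-1)) = some (i ℓ) ∧ j ℓ = j (ℓ-1)) ∧
    (∀ ℓ, 1 ≤ ℓ → ℓ < r.length →
        i (ℓ-1) ≤ i ℓ ∧ j ℓ ≤ j (ℓ-1) ∧ (i (ℓ-1) < i ℓ ∨ j ℓ < j (ℓ-1))) ∧
    i (r.length - 1) < p ∧ p < j (r.length - 1)

/-- `u` and `v` agree on rankers from the set `R`. -/
def AgreeDef (R : List (RLetter A) → Prop) (u v : List A) : Prop :=
  ∀ r, R r → (Defined u r ↔ Defined v r)

/-- `u` and `v` agree on condensed rankers from the set `R`. -/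
def AgreeCond (R : List (RLetter A) → Prop) (u v : List A) : Prop :=
  ∀ r, R r → (Condensed u r ↔ Condensed v r)

/-- `u ⊳_{m,n} v`. -/
def trir (m n : ℕ) (u v : List A) : Prop := AgreeCond (uRX m n) u v

/-- `u ⊲_{m,n} v`. -/
def tril (m n : ℕ) (u v : List A) : Prop := AgreeCond (uRY m n) u v

/-- The alphabet (set of letters) of a word. -/
def alph (u : List A) : Finset A := u.toFinset

/-- Condition (WI 1). -/
def WI1 (m n : ℕ) (u v : List A) : Prop := AgreeDef (uR m n) u v

/-- Condition (WI 2). -/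
def WI2 (m n : ℕ) (u v : List A) : Prop :=
  ∀ r r', uR m n r → uR (m-1) (n-1) r' →
    Defined u r → Defined v r → Defined u r' → Defined v r' →
    compare (pos u r) (pos u r') = compare (pos v r) (pos v r')

/-- Condition (WI 3). -/
def WI3 (m n : ℕ) (u v : List A) : Prop :=
  ∀ r r', uR m n r → uR m (n-1) r' →
    ((endsX r ∧ endsY r') ∨ (endsY r ∧ endsX r')) →
    Defined u r → Defined v r → Defined u r' → Defined v r' →
    compare (pos u r) (pos u r') = compare (pos v r) (pos v r')

/-- Condition (WI 1c). -/
def WI1c (m n : ℕ) (u v : List A) : Prop := AgreeCond (uR m n) u v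

/-- Condition (WI 2c). -/
def WI2c (m n : ℕ) (u v : List A) : Prop :=
  ∀ r r', uR m n r → uR (m-1) (n-1) r' →
    Condensed u r → Condensed v r → Condensed u r' → Condensed v r' →
    compare (pos u r) (pos u r') = compare (pos v r) (pos v r')

/-- Condition (WI 3c). -/
def WI3c (m n : ℕ) (u v : List A) : Prop :=
  ∀ r r', uR m n r → uR m (n-1) r' →
    ((endsX r ∧ endsY r') ∨ (endsY r ∧ endsX r')) →
    Condensed u r → Condensed v r → Condensed u r' → Condensed v r' →
    compare (pos u r) (pos u r') = compare (pos v r) (pos v r')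


set_option linter.unusedSectionVars false

/-! ### Helper material -/

def IsPos (u : List A) (a : A) (i : ℕ) : Prop := 1 ≤ i ∧ u[i-1]? = some a

theorem IsPos.le {u : List A} {a : A} {i : ℕ} (h : IsPos u a i) : i ≤ u.length := by
  obtain ⟨h1, h2⟩ := h
  have := (List.getElem?_eq_some_iff.1 h2).1
  omega

theorem head_filter_some (p : ℕ → Bool) (N x : ℕ) :
    ((List.range N).filter p).head? = some x → (x < N ∧ p x = true ∧ ∀ i, i < N → p i = true → x ≤ i) := by
  intro h
  rw [List.head?_filter, List.find?_range_eq_some] at h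
  obtain ⟨h1, h2, h3⟩ := h
  refine ⟨by simpa using h2, h1, fun i hi hp => ?_⟩
  by_contra hc
  have := h3 i (by omega)
  simp_all

theorem last_filter_some (p : ℕ → Bool) (N x : ℕ) :
    ((List.range N).filter p).getLast? = some x → (x < N ∧ p x = true ∧ ∀ i, i < N → p i = true → i ≤ x) := by
  intro h
  induction N with
  | zero => simp at h
  | succ N ih =>
    rw [List.range_succ, List.filter_append] at h
    by_cases hp : p N = true
    · simp [hp] at h
      subst h
      exact ⟨by omega, hp, fun i hi _ => by omega⟩
    · rw [List.filter_cons_of_neg hp, List.filter_nil, List.append_nil] at h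
      obtain ⟨h1, h2, h3⟩ := ih h
      refine ⟨by omega, h2, fun i hi hpi => ?_⟩
      rcases Nat.lt_succ_iff_lt_or_eq.1 hi with h' | h'
      · exact h3 i h' hpi
      · subst h'; exact absurd hpi hp

theorem nextOcc_some {u : List A} {a : A} {q x : ℕ} (h : nextOcc u a q = some x) :
    q < x ∧ IsPos u a x ∧ ∀ i, q < i → IsPos u a i → x ≤ i := by
  obtain ⟨h1, h2, h3⟩ := head_filter_some _ _ _ h
  simp only [decide_eq_true_eq] at h2 h3
  refine ⟨h2.1, ⟨by omega, h2.2⟩, fun i hi hp => h3 i ?_ ⟨hi, hp.2⟩⟩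
  have := hp.le
  omega

theorem nextOcc_none {u : List A} {a : A} {q : ℕ} (h : nextOcc u a q = none) :
    ∀ i, q < i → ¬ IsPos u a i := by
  intro i hi hp
  have := hp.le
  simp only [nextOcc, List.head?_eq_none_iff, List.filter_eq_nil_iff, List.mem_range,
    decide_eq_true_eq] at h
  exact h i (by omega) ⟨hi, hp.2⟩

theorem prevOcc_some {u : List A} {a : A} {q x : ℕ} (h : prevOcc u a q = some x) :
    x < q ∧ IsPos u a x ∧ ∀ i, i < q → IsPos u a i → i ≤ x := by
  obtain ⟨h1, h2, h3⟩ := last_filter_some _ _ _ h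
  simp only [decide_eq_true_eq] at h2 h3
  refine ⟨h2.2.1, ⟨h2.1, h2.2.2⟩, fun i hi hp => h3 i ?_ ⟨hp.1, hi, hp.2⟩⟩
  have := hp.le
  omega

theorem prevOcc_none {u : List A} {a : A} {q : ℕ} (h : prevOcc u a q = none) :
    ∀ i, i < q → ¬ IsPos u a i := by
  intro i hi hp
  have := hp.le
  simp only [prevOcc, List.getLast?_eq_none_iff, List.filter_eq_nil_iff, List.mem_range,
    decide_eq_true_eq] at h
  exact h i (by omega) ⟨hp.1, hi, hp.2⟩

theorem evalFrom_append (u : List A) (s t : List (RLetter A)) (q : ℕ) :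
    evalFrom u (s ++ t) q = (evalFrom u s q).bind (evalFrom u t) := by
  induction s generalizing q with
  | nil => simp [evalFrom]
  | cons z s ih =>
    simp only [List.cons_append, evalFrom, Option.bind_assoc]
    congr 1
    funext x
    exact ih x

theorem evalFrom_snoc (u : List A) (s : List (RLetter A)) (z : RLetter A) (q : ℕ) :
    evalFrom u (s ++ [z]) q = (evalFrom u s q).bind (stepR u z) := by
  rw [evalFrom_append]
  congr 1
  funext x
  simp [evalFrom]

def flipL : RLetter A → RLetter A
  | .X a => .Y a
  | .Y a => .X a

def letter : RLetter A → A
  | .X a => a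
  | .Y a => a

theorem IsPos.uniq {u : List A} {a b : A} {i : ℕ} (h : IsPos u a i) (h' : IsPos u b i) : a = b := by
  have := h.2.symm.trans h'.2
  simpa using this

theorem gt_next {u : List A} {d : A} {x0 x y : ℕ} (h : nextOcc u d x0 = some x) :
    x < y ↔ ∃ y1, prevOcc u d y = some y1 ∧ x0 < y1 := by
  obtain ⟨h1, h2, h3⟩ := nextOcc_some h
  constructor
  · intro hy
    cases hp : prevOcc u d y with
    | none => exact absurd h2 (prevOcc_none hp x hy)
    | some y1 =>
      have := (prevOcc_some hp).2.2 x hy h2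
      exact ⟨y1, rfl, by omega⟩
  · rintro ⟨y1, hp, hlt⟩
    obtain ⟨g1, g2, g3⟩ := prevOcc_some hp
    have := h3 y1 hlt g2
    omega

theorem lt_prev {u : List A} {d : A} {x0 x y : ℕ} (h : prevOcc u d x0 = some x) :
    y < x ↔ ∃ y1, nextOcc u d y = some y1 ∧ y1 < x0 := by
  obtain ⟨h1, h2, h3⟩ := prevOcc_some h
  constructor
  · intro hy
    cases hp : nextOcc u d y with
    | none => exact absurd h2 (nextOcc_none hp x hy)
    | some y1 =>
      have := (nextOcc_some hp).2.2 x hy h2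
      exact ⟨y1, rfl, by omega⟩
  · rintro ⟨y1, hp, hlt⟩
    obtain ⟨g1, g2, g3⟩ := nextOcc_some hp
    have := h3 y1 hlt g2
    omega

theorem lt_next {u : List A} {d f : A} {x0 x y : ℕ} (h : nextOcc u d x0 = some x)
    (hy : IsPos u f y) : y < x ↔ if f = d then ¬ (x0 < y) else ¬ (x < y) := by
  obtain ⟨h1, h2, h3⟩ := nextOcc_some h
  split_ifs with hfd
  · subst hfd
    have := h3 y
    constructor
    · intro a b; have := this b hy; omega
    · intro a; omega
  · have : y ≠ x := by rintro rfl; exact hfd (hy.uniq h2)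
    omega

theorem gt_prev {u : List A} {d f : A} {x0 x y : ℕ} (h : prevOcc u d x0 = some x)
    (hy : IsPos u f y) : x < y ↔ if f = d then ¬ (y < x0) else ¬ (y < x) := by
  obtain ⟨h1, h2, h3⟩ := prevOcc_some h
  split_ifs with hfd
  · subst hfd
    have := h3 y
    constructor
    · intro a b; have := this b hy; omega
    · intro a; omega
  · have : y ≠ x := by rintro rfl; exact hfd (hy.uniq h2)
    omega

theorem step_isPos {u : List A} {z : RLetter A} {q x : ℕ} (h : stepR u z q = some x) :
    IsPos u (letter z) x := by
  cases z with
  | X a => exact (nextOcc_some h).2.1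
  | Y a => exact (prevOcc_some h).2.1

theorem cmp {u v : List A} {su sv : ℕ}
    (hs : (su = 0 ∧ sv = 0) ∨ (su = u.length + 1 ∧ sv = v.length + 1))
    (t : List (RLetter A)) : ∀ (s : List (RLetter A)) (y y' x x' : ℕ) (f : A),
    evalFrom u s su = some y → evalFrom v s sv = some y' →
    IsPos u f y → IsPos v f y' →
    evalFrom u t su = some x → evalFrom v t sv = some x' →
    (∀ w, w.Sublist (t.map flipL).reverse →
      ((evalFrom u (s ++ w) su).isSome ↔ (evalFrom v (s ++ w) sv).isSome)) →
    (x < y ↔ x' < y') ∧ (y < x ↔ y' < x') := by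
  induction t using List.reverseRecOn with
  | nil =>
    intro s y y' x x' f _ _ hy hy' hx hx' _
    simp only [evalFrom, Option.some.injEq] at hx hx'
    subst hx hx'
    have := hy.le
    have := hy'.le
    have := hy.1
    have := hy'.1
    omega
  | append_singleton t z ih =>
    intro s y y' x x' f hsy hsy' hy hy' hx hx' hag
    rw [evalFrom_snoc] at hx hx'
    obtain ⟨x0, hx0, hx⟩ := Option.bind_eq_some_iff.1 hx
    obtain ⟨x0', hx0', hx'⟩ := Option.bind_eq_some_iff.1 hx'
    simp only [List.map_append, List.map_cons, List.map_nil, List.reverse_append,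
      List.reverse_cons, List.reverse_nil, List.nil_append, List.cons_append] at hag
    have base := ih s y y' x0 x0' f hsy hsy' hy hy' hx0 hx0'
      (fun w hw => hag w (hw.cons _))
    have hone := hag [flipL z] (by simp)
    rw [evalFrom_snoc, evalFrom_snoc, hsy, hsy'] at hone
    simp only [Option.bind_some] at hone
    have stp : ∀ y1 y1', stepR u (flipL z) y = some y1 → stepR v (flipL z) y' = some y1' →
        (x0 < y1 ↔ x0' < y1') ∧ (y1 < x0 ↔ y1' < x0') := by
      intro y1 y1' h1 h1'
      refine ih (s ++ [flipL z]) y1 y1' x0 x0' (letter (flipL z)) ?_ ?_ (step_isPos h1)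
        (step_isPos h1') hx0 hx0' ?_
      · rw [evalFrom_snoc, hsy]; exact h1
      · rw [evalFrom_snoc, hsy']; exact h1'
      · intro w hw
        have := hag (flipL z :: w) (hw.cons_cons _)
        simpa using this
    cases z with
    | X d =>
      simp only [flipL, stepR] at *
      have hgt : x < y ↔ x' < y' := by
        rw [gt_next hx, gt_next hx']
        cases h1 : prevOcc u d y with
        | none =>
          cases h1' : prevOcc v d y' with
          | none => simp
          | some y1' => simp [h1, h1'] at hone
        | some y1 =>
          cases h1' : prevOcc v d y' with
          | none => simp [h1, h1'] at hone
          | some y1' => simpa using (stp y1 y1' h1 h1').1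
      refine ⟨hgt, ?_⟩
      rw [lt_next hx hy, lt_next hx' hy', hgt, base.1]
    | Y d =>
      simp only [flipL, stepR] at *
      have hlt : y < x ↔ y' < x' := by
        rw [lt_prev hx, lt_prev hx']
        cases h1 : nextOcc u d y with
        | none =>
          cases h1' : nextOcc v d y' with
          | none => simp
          | some y1' => simp [h1, h1'] at hone
        | some y1 =>
          cases h1' : nextOcc v d y' with
          | none => simp [h1, h1'] at hone
          | some y1' => simpa using (stp y1 y1' h1 h1').2
      refine ⟨?_, hlt⟩
      rw [gt_prev hx hy, gt_prev hx' hy', hlt, base.2]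

/-! ### Blocks -/

theorem nb_cons_cons (z w : RLetter A) (t : List (RLetter A)) :
    numBlocks (z :: w :: t) = (if sameDir z w then 0 else 1) + numBlocks (w :: t) := rfl

theorem nb_cons_le (z w : RLetter A) (t : List (RLetter A)) :
    numBlocks (z :: t) ≤ (if sameDir z w then 0 else 1) + numBlocks (w :: t) := by
  cases t with
  | nil => simp [numBlocks]
  | cons c t =>
    rw [nb_cons_cons, nb_cons_cons]
    cases z <;> cases w <;> cases c <;> simp [sameDir] <;> omega

theorem nb_le_cons (w : RLetter A) (t : List (RLetter A)) :
    numBlocks t ≤ numBlocks (w :: t) := by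
  cases t with
  | nil => simp [numBlocks]
  | cons c t => rw [nb_cons_cons]; omega

theorem nb_sublist_aux {l1 l2 : List (RLetter A)} (h : l1.Sublist l2) :
    ∀ z, numBlocks (z :: l1) ≤ numBlocks (z :: l2) := by
  induction h with
  | slnil => intro z; exact le_rfl
  | cons a h ih =>
    intro z
    rw [nb_cons_cons]
    have := nb_cons_le z a
    refine le_trans (nb_cons_le z a _) ?_
    have := ih a
    omega
  | cons_cons a h ih =>
    intro z
    rw [nb_cons_cons, nb_cons_cons]
    have := ih a
    omega

theorem nb_sublist {l1 l2 : List (RLetter A)} (h : l1.Sublist l2) :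
    numBlocks l1 ≤ numBlocks l2 := by
  induction h with
  | slnil => exact le_rfl
  | cons a h ih => exact ih.trans (nb_le_cons _ _)
  | cons_cons a h ih => exact nb_sublist_aux h a

theorem nb_append (l1 l2 : List (RLetter A)) :
    numBlocks (l1 ++ l2) ≤ numBlocks l1 + numBlocks l2 := by
  induction l1 with
  | nil => simp
  | cons a l ih =>
    cases l with
    | nil =>
      cases l2 with
      | nil => simp [numBlocks]
      | cons c t =>
        simp only [List.cons_append, List.nil_append, nb_cons_cons, numBlocks]
        split_ifs <;> omega
    | cons b l =>
      simp only [List.cons_append, nb_cons_cons] at *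
      omega

theorem nb_snoc (l : List (RLetter A)) (b c : RLetter A) :
    numBlocks (l ++ [b, c]) = numBlocks (l ++ [b]) + (if sameDir b c then 0 else 1) := by
  induction l with
  | nil => simp [numBlocks]; omega
  | cons a l ih =>
    cases l with
    | nil => simp [numBlocks]; omega
    | cons d l =>
      simp only [List.cons_append, nb_cons_cons] at *
      omega

theorem nb_flip_reverse (t : List (RLetter A)) :
    numBlocks (t.map flipL).reverse = numBlocks t := by
  induction t with
  | nil => rfl
  | cons a t ih =>
    cases t with
    | nil => simp [numBlocks]
    | cons b t =>
      rw [nb_cons_cons, ← ih]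
      simp only [List.map_cons, List.reverse_cons, List.append_assoc, List.cons_append,
        List.nil_append]
      rw [nb_snoc, add_comm]
      cases a <;> cases b <;> simp [sameDir, flipL]

/-! ### Characterisation of condensed rankers -/

def Path (u : List A) (r : List (RLetter A)) (st : ℕ) (P : ℕ → ℕ) : Prop :=
  ∀ k, k ≤ r.length → evalFrom u (r.take k) st = some (P k)

def Good (r : List (RLetter A)) (P : ℕ → ℕ) : Prop :=
  ∀ l k, l < k → k ≤ r.length → (∀ a, r[l]? = some (RLetter.X a) → P l < P k) ∧
    (∀ a, r[l]? = some (RLetter.Y a) → P k < P l)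

theorem exists_path {u : List A} {r : List (RLetter A)} {st p : ℕ}
    (h : evalFrom u r st = some p) : ∃ P, Path u r st P := by
  refine ⟨fun k => (evalFrom u (r.take k) st).getD 0, fun k hk => ?_⟩
  have h' : evalFrom u (r.take k ++ r.drop k) st = some p := by
    rw [List.take_append_drop]; exact h
  rw [evalFrom_append] at h'
  obtain ⟨x, hx, _⟩ := Option.bind_eq_some_iff.1 h'
  simp [hx]

theorem Path.zero {u : List A} {r : List (RLetter A)} {st : ℕ} {P : ℕ → ℕ}
    (h : Path u r st P) : P 0 = st := by
  have := h 0 (Nat.zero_le _)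
  simpa [evalFrom, eq_comm] using this

theorem Path.step {u : List A} {r : List (RLetter A)} {st : ℕ} {P : ℕ → ℕ}
    (h : Path u r st P) {k : ℕ} {z : RLetter A} (hz : r[k]? = some z) :
    stepR u z (P k) = some (P (k+1)) := by
  have hk := (List.getElem?_eq_some_iff.1 hz).1
  have h2 := h (k+1) hk
  rw [List.take_add_one, hz, Option.toList_some, evalFrom_snoc, h k hk.le] at h2
  exact h2

theorem Path.last {u : List A} {r : List (RLetter A)} {st : ℕ} {P : ℕ → ℕ}
    (h : Path u r st P) : evalFrom u r st = some (P r.length) := by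
  have := h r.length le_rfl
  simpa using this

theorem Path.isPos {u : List A} {r : List (RLetter A)} {st : ℕ} {P : ℕ → ℕ}
    (h : Path u r st P) {k : ℕ} {z : RLetter A} (hz : r[k]? = some z) :
    IsPos u (letter z) (P (k+1)) := step_isPos (h.step hz)

theorem get_some {r : List (RLetter A)} {k : ℕ} (h : k < r.length) :
    (∃ a, r[k]? = some (RLetter.X a)) ∨ (∃ a, r[k]? = some (RLetter.Y a)) := by
  cases hz : r[k]? with
  | none => rw [List.getElem?_eq_none_iff] at hz; omega
  | some z => cases z <;> simp

theorem good_of_condensed {u : List A} {z : RLetter A} {t : List (RLetter A)}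
    (h : Condensed u (z :: t)) : ∃ P, Path u (z :: t) (startPos u z) P ∧ Good (z :: t) P := by
  obtain ⟨p, i, j, he, hi0, hj0, hXX, hYY, hXY, hYX, hn, hp1, hp2⟩ := h
  change evalFrom u (z :: t) (startPos u z) = some p at he
  obtain ⟨P, hP⟩ := exists_path he
  have hlast : P (z :: t).length = p := by
    have := hP.last; rw [he] at this; simpa using this.symm
  have hz0 : (z :: t)[0]? = some z := rfl
  have hPz := hP.zero
  have hr0 : 1 ≤ (z :: t).length := by simp
  generalize (z :: t) = r at *
  refine ⟨P, hP, ?_⟩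
  have hmono : ∀ d l, l + d < r.length → i l ≤ i (l+d) ∧ j (l+d) ≤ j l := by
    intro d
    induction d with
    | zero => intro l _; simp
    | succ d ih =>
      intro l hl
      have h1 := ih l (by omega)
      have h2 := hn (l+d+1) (by omega) (by omega)
      simp only [Nat.add_sub_cancel] at h2
      rw [← add_assoc]
      omega
  have hmono' : ∀ l k, l ≤ k → k < r.length → i l ≤ i k ∧ j k ≤ j l := by
    intro l k hlk hk
    have := hmono (k-l) l (by omega)
    rwa [Nat.add_sub_cancel' hlk] at this
  have key : ∀ l, (∀ a, r[l]? = some (RLetter.X a) → i l = P l) ∧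
      (∀ a, r[l]? = some (RLetter.Y a) → j l = P l) := by
    intro l
    induction l with
    | zero =>
      constructor
      · intro a ha
        rw [hz0] at ha
        cases ha
        simpa [hi0, startPos] using hPz.symm
      · intro a ha
        rw [hz0] at ha
        cases ha
        simpa [hj0, startPos] using hPz.symm
    | succ l ih =>
      have hl : ∀ w, r[l+1]? = some w → l < r.length := by
        intro w hw
        have := (List.getElem?_eq_some_iff.1 hw).1
        omega
      constructor
      · intro b hb
        rcases get_some (hl _ hb) with ⟨a, ha⟩ | ⟨a, ha⟩
        · have h1 := (hXX (l+1) a b (by omega) ha hb).1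
          have h2 := hP.step ha
          simp only [Nat.add_sub_cancel, stepR] at h1 h2
          rw [ih.1 a ha, h2] at h1
          simpa using h1.symm
        · have h1 := (hYX (l+1) a b (by omega) ha hb).1
          have h2 := hP.step ha
          simp only [Nat.add_sub_cancel, stepR] at h1 h2
          rw [ih.2 a ha, h2] at h1
          simpa using h1.symm
      · intro b hb
        rcases get_some (hl _ hb) with ⟨a, ha⟩ | ⟨a, ha⟩
        · have h1 := (hXY (l+1) a b (by omega) ha hb).2
          have h2 := hP.step ha
          simp only [Nat.add_sub_cancel, stepR] at h1 h2
          rw [ih.1 a ha, h2] at h1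
          simpa using h1.symm
        · have h1 := (hYY (l+1) a b (by omega) ha hb).2
          have h2 := hP.step ha
          simp only [Nat.add_sub_cancel, stepR] at h1 h2
          rw [ih.2 a ha, h2] at h1
          simpa using h1.symm
  have hin : ∀ k, k + 1 ≤ r.length → i k < P (k+1) ∧ P (k+1) < j k := by
    intro k hk
    rcases Nat.lt_or_ge (k+1) r.length with hlt | hge
    · have hij := hmono' (k+1) (r.length - 1) (by omega) (by omega)
      have hs := hn (k+1) (by omega) hlt
      have hky := key (k+1)
      simp only [Nat.add_sub_cancel] at hs
      rcases get_some hlt with ⟨b, hb⟩ | ⟨b, hb⟩ <;>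
      rcases get_some (show k < r.length by omega) with ⟨a, ha⟩ | ⟨a, ha⟩
      · have h1 := (hXX (k+1) a b (by omega) ha hb).2
        have h2 := hky.1 b hb
        simp only [Nat.add_sub_cancel] at h1
        omega
      · have h1 := (hYX (k+1) a b (by omega) ha hb).2
        have h2 := hky.1 b hb
        simp only [Nat.add_sub_cancel] at h1
        omega
      · have h1 := (hXY (k+1) a b (by omega) ha hb).1
        have h2 := hky.2 b hb
        simp only [Nat.add_sub_cancel] at h1
        omega
      · have h1 := (hYY (k+1) a b (by omega) ha hb).1
        have h2 := hky.2 b hb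
        simp only [Nat.add_sub_cancel] at h1
        omega
    · have hkk : k + 1 = r.length := by omega
      have : r.length - 1 = k := by omega
      rw [this] at hp1 hp2
      rw [hkk, hlast]
      exact ⟨hp1, hp2⟩
  intro l k hlk hk
  obtain ⟨k, rfl⟩ : ∃ k', k = k' + 1 := ⟨k - 1, by omega⟩
  have h1 := hmono' l k (by omega) (by omega)
  have h2 := hin k hk
  constructor
  · intro a ha
    have := (key l).1 a ha
    omega
  · intro a ha
    have := (key l).2 a ha
    omega

def loI (r : List (RLetter A)) (P : ℕ → ℕ) : ℕ → ℕ
  | 0 => 0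
  | k+1 => match r[k+1]? with
    | some (RLetter.X _) => P (k+1)
    | _ => loI r P k

def hiJ (r : List (RLetter A)) (P : ℕ → ℕ) (N : ℕ) : ℕ → ℕ
  | 0 => N
  | k+1 => match r[k+1]? with
    | some (RLetter.Y _) => P (k+1)
    | _ => hiJ r P N k

theorem condensed_of_good {u : List A} {z : RLetter A} {t : List (RLetter A)} {P : ℕ → ℕ}
    (hP : Path u (z :: t) (startPos u z) P) (hG : Good (z :: t) P) : Condensed u (z :: t) := by
  have he := hP.last
  have hz0 : (z :: t)[0]? = some z := rfl
  have hPz := hP.zero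
  have hr0 : 1 ≤ (z :: t).length := by simp
  have he' : evalR u (z :: t) = some (P (z :: t).length) := he
  generalize (z :: t) = r at *
  have hkX : ∀ l a, r[l]? = some (RLetter.X a) → loI r P l = P l := by
    intro l a ha
    cases l with
    | zero =>
      rw [hz0] at ha
      cases ha
      simpa [loI, startPos] using hPz.symm
    | succ l => simp [loI, ha]
  have hkY : ∀ l a, r[l]? = some (RLetter.Y a) → hiJ r P (u.length+1) l = P l := by
    intro l a ha
    cases l with
    | zero =>
      rw [hz0] at ha
      cases ha
      simpa [hiJ, startPos] using hPz.symm
    | succ l => simp [hiJ, ha]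
  have hin : ∀ l k, l < k → k ≤ r.length → loI r P l < P k ∧ P k < hiJ r P (u.length+1) l := by
    intro l
    induction l with
    | zero =>
      intro k hk hk'
      obtain ⟨k, rfl⟩ : ∃ k', k = k' + 1 := ⟨k - 1, by omega⟩
      have : ∃ f, IsPos u f (P (k+1)) := by
        rcases get_some (show k < r.length by omega) with ⟨a, ha⟩ | ⟨a, ha⟩
        · exact ⟨_, hP.isPos ha⟩
        · exact ⟨_, hP.isPos ha⟩
      obtain ⟨f, hf⟩ := this
      have := hf.le
      have := hf.1
      simp only [loI, hiJ]
      omega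
    | succ l ih =>
      intro k hk hk'
      have h1 := ih k (by omega) hk'
      have h2 := hG (l+1) k hk hk'
      rcases get_some (show l + 1 < r.length by omega) with ⟨a, ha⟩ | ⟨a, ha⟩
      · have := h2.1 a ha
        simp only [loI, hiJ, ha]
        omega
      · have := h2.2 a ha
        simp only [loI, hiJ, ha]
        omega
  refine ⟨P r.length, loI r P, hiJ r P (u.length+1), he', rfl, rfl, ?_, ?_, ?_, ?_, ?_, ?_⟩
  · intro l a b hl ha hb
    obtain ⟨l, rfl⟩ : ∃ k', l = k' + 1 := ⟨l - 1, by omega⟩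
    simp only [Nat.add_sub_cancel] at *
    refine ⟨?_, by simp [hiJ, hb]⟩
    rw [hkX l a ha, hkX (l+1) b hb]
    exact hP.step ha
  · intro l a b hl ha hb
    obtain ⟨l, rfl⟩ : ∃ k', l = k' + 1 := ⟨l - 1, by omega⟩
    simp only [Nat.add_sub_cancel] at *
    refine ⟨by simp [loI, hb], ?_⟩
    rw [hkY l a ha, hkY (l+1) b hb]
    exact hP.step ha
  · intro l a b hl ha hb
    obtain ⟨l, rfl⟩ : ∃ k', l = k' + 1 := ⟨l - 1, by omega⟩
    simp only [Nat.add_sub_cancel] at *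
    refine ⟨by simp [loI, hb], ?_⟩
    rw [hkX l a ha, hkY (l+1) b hb]
    exact hP.step ha
  · intro l a b hl ha hb
    obtain ⟨l, rfl⟩ : ∃ k', l = k' + 1 := ⟨l - 1, by omega⟩
    simp only [Nat.add_sub_cancel] at *
    refine ⟨?_, by simp [hiJ, hb]⟩
    rw [hkY l a ha, hkX (l+1) b hb]
    exact hP.step ha
  · intro l hl hl'
    obtain ⟨l, rfl⟩ : ∃ k', l = k' + 1 := ⟨l - 1, by omega⟩
    simp only [Nat.add_sub_cancel] at *
    have h1 := hin l (l+1) (by omega) (by omega)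
    rcases get_some hl' with ⟨a, ha⟩ | ⟨a, ha⟩
    · simp only [loI, hiJ, ha]
      omega
    · simp only [loI, hiJ, ha]
      omega
  · exact hin (r.length - 1) r.length (by omega) le_rfl

theorem nb_take_mono (r : List (RLetter A)) {k l : ℕ} (h : k ≤ l) :
    numBlocks (r.take k) ≤ numBlocks (r.take l) := by
  refine nb_sublist ?_
  rw [show k = min k l by omega, ← List.take_take]
  exact List.take_sublist _ _

theorem sameDir_of_nb {r : List (RLetter A)} {l i : ℕ} (hl : l ≤ i + 1)
    (hnb : numBlocks r ≤ numBlocks (r.take l)) {z w : RLetter A}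
    (hz : r[i]? = some z) (hw : r[i+1]? = some w) : sameDir z w = true := by
  have h1 := nb_take_mono r hl
  have h2 : numBlocks (r.take (i+2)) ≤ numBlocks r := nb_sublist (List.take_sublist _ _)
  have h3 : r.take (i+2) = r.take i ++ [z, w] := by
    rw [List.take_add_one (i := i+1), List.take_add_one, hz, hw]; simp
  have h4 : r.take (i+1) = r.take i ++ [z] := by
    rw [List.take_add_one, hz]; simp
  rw [h3, nb_snoc] at h2
  rw [h4] at h1
  by_contra hc
  simp only [hc] at h2
  simp at h2
  omega

theorem key_lemma {u v : List A} {z : RLetter A} {t : List (RLetter A)}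
    (hag : ∀ q, q.head? = some z → numBlocks q ≤ 2 * numBlocks (z :: t) - 1 →
      q.length ≤ 2 * (z :: t).length - 1 → (Defined u q ↔ Defined v q))
    (hc : Condensed u (z :: t)) : Condensed v (z :: t) := by
  obtain ⟨P, hP, hG⟩ := good_of_condensed hc
  have hnb1 : 1 ≤ numBlocks (z :: t) := by
    have : numBlocks [z] ≤ numBlocks (z :: t) := nb_sublist (by simp)
    simpa [numBlocks] using this
  have hag' : ∀ k w, 1 ≤ k → numBlocks ((z :: t).take k ++ w) ≤ 2 * numBlocks (z :: t) - 1 →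
      ((z :: t).take k ++ w).length ≤ 2 * (z :: t).length - 1 →
      ((evalFrom u ((z :: t).take k ++ w) (startPos u z)).isSome ↔
        (evalFrom v ((z :: t).take k ++ w) (startPos v z)).isSome) := by
    intro k w hk h1 h2
    obtain ⟨k, rfl⟩ : ∃ k', k = k' + 1 := ⟨k - 1, by omega⟩
    exact hag ((z :: t).take (k+1) ++ w) (by simp) h1 h2
  have hdef : (evalFrom v (z :: t) (startPos v z)).isSome := by
    have hlen : 1 ≤ (z :: t).length := by simp
    have := hag' (z :: t).length [] hlen (by simp; omega) (by simp; omega)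
    rw [List.take_length, List.append_nil, hP.last] at this
    simpa using this
  obtain ⟨p, hp⟩ := Option.isSome_iff_exists.1 hdef
  obtain ⟨P', hP'⟩ := exists_path hp
  refine condensed_of_good hP' ?_
  intro l k hlk hk
  have hst : (startPos u z = 0 ∧ startPos v z = 0) ∨
      (startPos u z = u.length + 1 ∧ startPos v z = v.length + 1) := by
    cases z <;> simp [startPos]
  generalize hr : (z :: t) = r at *
  by_cases hb : numBlocks (r.take l) < numBlocks r
  · have hpos : ∃ f, IsPos u f (P k) ∧ IsPos v f (P' k) := by
      obtain ⟨k, rfl⟩ : ∃ k', k = k' + 1 := ⟨k - 1, by omega⟩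
      rcases get_some (show k < r.length by omega) with ⟨a, ha⟩ | ⟨a, ha⟩
      · exact ⟨_, hP.isPos ha, hP'.isPos ha⟩
      · exact ⟨_, hP.isPos ha, hP'.isPos ha⟩
    obtain ⟨f, hf, hf'⟩ := hpos
    have hcmp := cmp hst (r.take l) (r.take k) (P k) (P' k) (P l) (P' l) f
      (hP k hk) (hP' k hk) hf hf' (hP l (by omega)) (hP' l (by omega)) (by
        intro w hw
        refine hag' k w (by omega) ?_ ?_
        · have h1 := nb_append (r.take k) w
          have h2 := nb_sublist hw
          rw [nb_flip_reverse] at h2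
          have h3 : numBlocks (r.take k) ≤ numBlocks r := nb_sublist (List.take_sublist _ _)
          omega
        · have := hw.length_le
          simp only [List.length_reverse, List.length_map, List.length_take,
            List.length_append] at this ⊢
          omega)
    have hg := hG l k hlk hk
    exact ⟨fun a ha => hcmp.1.1 (hg.1 a ha), fun a ha => hcmp.2.1 (hg.2 a ha)⟩
  · have hb' : numBlocks r ≤ numBlocks (r.take l) := by omega
    constructor
    · intro a ha
      have hall : ∀ d, l + d < r.length → ∃ b, r[l+d]? = some (RLetter.X b) := by
        intro d
        induction d with
        | zero => intro _; exact ⟨a, ha⟩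
        | succ d ih =>
          intro hd
          obtain ⟨b, hb⟩ := ih (by omega)
          rcases get_some hd with h | ⟨c, hc⟩
          · exact h
          · have := sameDir_of_nb (l := l) (i := l + d) (by omega) hb' hb hc
            simp [sameDir] at this
      have hinc : ∀ d, l + d < r.length → P' l < P' (l+d+1) := by
        intro d
        induction d with
        | zero =>
          intro _
          exact (nextOcc_some (hP'.step ha)).1
        | succ d ih =>
          intro hd
          have h1 := ih (by omega)
          obtain ⟨b, hb⟩ := hall (d+1) hd
          exact h1.trans (nextOcc_some (hP'.step hb)).1
      have := hinc (k - l - 1) (by omega)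
      rwa [show l + (k - l - 1) + 1 = k by omega] at this
    · intro a ha
      have hall : ∀ d, l + d < r.length → ∃ b, r[l+d]? = some (RLetter.Y b) := by
        intro d
        induction d with
        | zero => intro _; exact ⟨a, ha⟩
        | succ d ih =>
          intro hd
          obtain ⟨b, hb⟩ := ih (by omega)
          rcases get_some hd with ⟨c, hc⟩ | h
          · have := sameDir_of_nb (l := l) (i := l + d) (by omega) hb' hb hc
            simp [sameDir] at this
          · exact h
      have hinc : ∀ d, l + d < r.length → P' (l+d+1) < P' l := by
        intro d
        induction d with
        | zero =>
          intro _
          exact (prevOcc_some (hP'.step ha)).1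
        | succ d ih =>
          intro hd
          have h1 := ih (by omega)
          obtain ⟨b, hb⟩ := hall (d+1) hd
          exact (prevOcc_some (hP'.step hb)).1.trans h1
      have := hinc (k - l - 1) (by omega)
      rwa [show l + (k - l - 1) + 1 = k by omega] at this

theorem key_iff {u v : List A} {z : RLetter A} {t : List (RLetter A)}
    (hag : ∀ q, q.head? = some z → numBlocks q ≤ 2 * numBlocks (z :: t) - 1 →
      q.length ≤ 2 * (z :: t).length - 1 → (Defined u q ↔ Defined v q)) :
    Condensed u (z :: t) ↔ Condensed v (z :: t) :=
  ⟨key_lemma hag, key_lemma fun q h1 h2 h3 => (hag q h1 h2 h3).symm⟩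

theorem head_some {q : List (RLetter A)} {z : RLetter A} (h : q.head? = some z) :
    ∃ s, q = z :: s := by
  cases q with
  | nil => simp at h
  | cons a s => simp at h; subst h; exact ⟨s, rfl⟩

/-- Agreement on rankers from `uR^Z_{2m-1,2n-1}` implies agreement on
condensed rankers from `uR^Z_{m,n}`. -/
theorem statement16 (m n : ℕ) (hm : 1 ≤ m) (hmn : m ≤ n)
    (ZR : ℕ → ℕ → List (RLetter A) → Prop) (hZR : ZR = uRX ∨ ZR = uRY)
    (u v : List A)
    (h : ∀ r, ZR (2*m-1) (2*n-1) r → (Defined u r ↔ Defined v r)) :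
    ∀ r, ZR m n r → (Condensed u r ↔ Condensed v r) := by
  rcases hZR with rfl | rfl
  · rintro r (⟨m', n', h1, h2, rfl, rfl, a, t, rfl⟩ | ⟨m', n', h1, h2, rfl, rfl, a, t, rfl⟩)
    · refine key_iff fun q hq hq1 hq2 => h q (Or.inl ⟨_, _, ?_, ?_, rfl, rfl, ?_⟩)
      · omega
      · omega
      · exact ⟨a, head_some hq⟩
    · refine key_iff fun q hq hq1 hq2 => h q (Or.inr ⟨_, _, ?_, ?_, rfl, rfl, ?_⟩)
      · omega
      · omega
      · exact ⟨a, head_some hq⟩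
  · rintro r (⟨m', n', h1, h2, rfl, rfl, a, t, rfl⟩ | ⟨m', n', h1, h2, rfl, rfl, a, t, rfl⟩)
    · refine key_iff fun q hq hq1 hq2 => h q (Or.inl ⟨_, _, ?_, ?_, rfl, rfl, ?_⟩)
      · omega
      · omega
      · exact ⟨a, head_some hq⟩
    · refine key_iff fun q hq hq1 hq2 => h q (Or.inr ⟨_, _, ?_, ?_, rfl, rfl, ?_⟩)
      · omega
      · omega
      · exact ⟨a, head_some hq⟩

end RankerPaper
end

section
/- If a ranker r is condensed on a word u ∈ A*, then the number of alternating blocks of r is at most |A|, the cardinality of the alphabet A. -/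
namespace RankerPaper

variable {A : Type*} [DecidableEq A]

theorem numBlocks_le_aux : ∀ (r : List (RLetter A)) (f : ℕ → ℕ), r ≠ [] →
    (∀ ℓ z w, r[ℓ]? = some z → r[ℓ+1]? = some w →
      f (ℓ+1) + (if sameDir z w then 0 else 1) ≤ f ℓ) →
    1 ≤ f (r.length - 1) → numBlocks r ≤ f 0
  | [], _, h, _, _ => absurd rfl h
  | [_], f, _, _, h => by simpa [numBlocks] using h
  | z :: w :: t, f, _, h, h1 => by
    have ih := numBlocks_le_aux (w :: t) (fun n => f (n+1)) (by simp)
      (fun ℓ a b ha hb => h (ℓ+1) a b (by simpa using ha) (by simpa using hb))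
      (by simpa using h1)
    have h0 := h 0 z w (by simp) (by simp)
    simp only [numBlocks]
    simp only [zero_add] at ih h0
    omega

theorem nextOcc_spec {u : List A} {a : A} {q n : ℕ} (h : nextOcc u a q = some n) :
    q < n ∧ u[n-1]? = some a ∧ ∀ k, q < k → k < n → u[k-1]? ≠ some a := by
  unfold nextOcc at h
  have hm := List.mem_of_head? h
  simp only [List.mem_filter, List.mem_range, decide_eq_true_eq] at hm
  obtain ⟨hn, h1, h2⟩ := hm
  refine ⟨h1, h2, fun k hk hkn hka => ?_⟩
  have hs : ((List.range (u.length + 2)).filter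
      (fun i => decide (q < i ∧ u[i-1]? = some a))).Pairwise (· < ·) :=
    List.Pairwise.filter _ List.pairwise_lt_range
  have hkm : k ∈ (List.range (u.length + 2)).filter
      (fun i => decide (q < i ∧ u[i-1]? = some a)) := by
    simp only [List.mem_filter, List.mem_range, decide_eq_true_eq]
    exact ⟨by omega, hk, hka⟩
  generalize (List.range (u.length + 2)).filter
      (fun i => decide (q < i ∧ u[i-1]? = some a)) = l at *
  cases l with
  | nil => simp at h
  | cons x t =>
    simp at h
    subst h
    rw [List.pairwise_cons] at hs
    rcases List.mem_cons.1 hkm with h | h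
    · omega
    · have := hs.1 k h
      omega

theorem prevOcc_spec {u : List A} {a : A} {q n : ℕ} (h : prevOcc u a q = some n) :
    n < q ∧ u[n-1]? = some a ∧ ∀ k, n < k → k < q → u[k-1]? ≠ some a := by
  unfold prevOcc at h
  have hm := List.mem_of_getLast? h
  simp only [List.mem_filter, List.mem_range, decide_eq_true_eq] at hm
  obtain ⟨hn, h0, h1, h2⟩ := hm
  refine ⟨h1, h2, fun k hk hkn hka => ?_⟩
  have hs : ((List.range (u.length + 2)).filter
      (fun i => decide (1 ≤ i ∧ i < q ∧ u[i-1]? = some a))).Pairwise (· < ·) :=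
    List.Pairwise.filter _ List.pairwise_lt_range
  have hkm : k ∈ (List.range (u.length + 2)).filter
      (fun i => decide (1 ≤ i ∧ i < q ∧ u[i-1]? = some a)) := by
    simp only [List.mem_filter, List.mem_range, decide_eq_true_eq]
    obtain ⟨hh, -⟩ := List.getElem?_eq_some_iff.1 hka
    exact ⟨by omega, by omega, hkn, hka⟩
  generalize (List.range (u.length + 2)).filter
      (fun i => decide (1 ≤ i ∧ i < q ∧ u[i-1]? = some a)) = l at *
  obtain ⟨t, rfl⟩ := List.getLast?_eq_some_iff.1 h
  rw [List.pairwise_append] at hs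
  rcases List.mem_append.1 hkm with h | h
  · have := hs.2.2 k h n (by simp)
    omega
  · simp at h
    omega

/-- A ranker condensed on a word over `A` has at most `|A|`
alternating blocks. -/
theorem statement18 [Fintype A] (u : List A) (r : List (RLetter A))
    (h : Condensed u r) : numBlocks r ≤ Fintype.card A := by
  classical
  obtain ⟨p, i, j, hp, hi0, hj0, hXX, hYY, hXY, hYX, hmono, hip, hpj⟩ := h
  have hr : r ≠ [] := by
    rintro rfl
    simp [evalR] at hp
  let S : ℕ → Finset A := fun ℓ =>
    Finset.univ.filter (fun a => ∃ q, i ℓ < q ∧ q < j ℓ ∧ u[q-1]? = some a)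
  have hbd : ∀ ℓ, ℓ < r.length → j ℓ ≤ u.length + 1 := by
    intro ℓ
    induction ℓ with
    | zero => intro _; omega
    | succ n ih =>
      intro hl
      have h1 := (hmono (n+1) (by omega) hl).2.1
      have h2 := ih (by omega)
      simp only [Nat.add_sub_cancel] at h1
      omega
  have hpos := List.length_pos_iff.2 hr
  refine (numBlocks_le_aux r (fun ℓ => (S ℓ).card) hr ?_ ?_).trans (Finset.card_le_univ _)
  · intro ℓ z w hz hw
    have hlen : ℓ + 1 < r.length := (List.getElem?_eq_some_iff.1 hw).1
    have hm := hmono (ℓ+1) (by omega) hlen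
    simp only [Nat.add_sub_cancel] at hm
    have hsub : S (ℓ+1) ⊆ S ℓ := by
      intro a ha
      simp only [S, Finset.mem_filter, Finset.mem_univ, true_and] at ha ⊢
      obtain ⟨q, h1, h2, h3⟩ := ha
      exact ⟨q, by omega, by omega, h3⟩
    have key : ∀ a, a ∈ S ℓ → a ∉ S (ℓ+1) → (S (ℓ+1)).card + 1 ≤ (S ℓ).card :=
      fun a h1 h2 => Finset.card_lt_card ⟨hsub, fun h => h2 (h h1)⟩
    cases z with
    | X a =>
      cases w with
      | X b => simpa [sameDir] using Finset.card_le_card hsub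
      | Y b =>
        obtain ⟨h1, h2⟩ := hXY (ℓ+1) a b (by omega) (by simpa using hz) hw
        simp only [Nat.add_sub_cancel] at h1 h2
        obtain ⟨h3, h4, h5⟩ := nextOcc_spec h2
        simp only [sameDir]
        refine key a ?_ ?_
        · simp only [S, Finset.mem_filter, Finset.mem_univ, true_and]
          exact ⟨j (ℓ+1), h3, by omega, h4⟩
        · simp only [S, Finset.mem_filter, Finset.mem_univ, true_and]
          rintro ⟨q, h6, h7, h8⟩
          exact h5 q (by omega) h7 h8
    | Y a =>
      cases w with
      | Y b => simpa [sameDir] using Finset.card_le_card hsub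
      | X b =>
        obtain ⟨h2, h1⟩ := hYX (ℓ+1) a b (by omega) (by simpa using hz) hw
        simp only [Nat.add_sub_cancel] at h1 h2
        obtain ⟨h3, h4, h5⟩ := prevOcc_spec h2
        simp only [sameDir]
        refine key a ?_ ?_
        · simp only [S, Finset.mem_filter, Finset.mem_univ, true_and]
          exact ⟨i (ℓ+1), by omega, h3, h4⟩
        · simp only [S, Finset.mem_filter, Finset.mem_univ, true_and]
          rintro ⟨q, h6, h7, h8⟩
          exact h5 q h6 (by omega) h8
  · have hj := hbd (r.length - 1) (by omega)
    have hlt : p - 1 < u.length := by omega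
    refine Finset.card_pos.2 ⟨u[p-1], ?_⟩
    simp only [S, Finset.mem_filter, Finset.mem_univ, true_and]
    exact ⟨p, hip, hpj, List.getElem?_eq_getElem hlt⟩
end RankerPaper
end
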